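/- arXiv:math/0601601 — 4 statements merged into one kernel-verified Lean document; each statement's English description precedes it below -/
import Mathlib

section
/- Let A be a unital associative algebra over ℂ (possibly noncommutative), let m, n be positive integers, and let U be an m × m matrix and V an n × n matrix with entries in A. Suppose there exist finitely many triples (d_s, W_s, T_s) for s = 1,…,r, where d_s is a positive integer, W_s is a d_s × d_s matrix over A, and T_s is a complex (m·n) × d_s matrix whose rows are indexed by pairs (i,k) ∈ {1,…,m} × {1,…,n}, such that: (a) Σ_{s=1}^r T_s T_s* = 1_{mn}; (b) X T_s = T_s W_s for every s, where X is the (m·n) × (m·n) matrix over A with entries X_{(i,k),(j,l)} = U_{ij}·V_{kl}; and (c) Y (F T_s) = (F T_s) W_s for every s, where Y is the (n·m) × (n·m) matrix over A with entries Y_{(k,i),(l,j)} = V_{kl}·U_{ij}, and F T_s is the (n·m) × d_s matrix with (F T_s)_{(k,i),t} = (T_s)_{(i,k),t}. Then U_{ij}·V_{kl} = V_{kl}·U_{ij} in A for all i, j, k, l. -/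
open scoped Matrix

/-- If `{U_π}` behaves like a unitary representation of the dual of a finite group,
its entries pairwise commute. Here the representation relations for `π⊗ρ` and `ρ⊗π`
are encoded by explicit matrix hypotheses. -/
theorem entries_commute_of_rep
    {A : Type*} [Ring A] [Algebra ℂ A]
    (m n : ℕ) (hm : 0 < m) (hn : 0 < n)
    (U : Matrix (Fin m) (Fin m) A) (V : Matrix (Fin n) (Fin n) A)
    (r : ℕ) (d : Fin r → ℕ) (hd : ∀ s, 0 < d s)
    (W : (s : Fin r) → Matrix (Fin (d s)) (Fin (d s)) A)
    (T : (s : Fin r) → Matrix (Fin m × Fin n) (Fin (d s)) ℂ)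
    (ha : ∑ s, ((T s).map (algebraMap ℂ A)) * (((T s)ᴴ).map (algebraMap ℂ A)) = 1)
    (hb : ∀ s,
      (Matrix.of fun p q : Fin m × Fin n => U p.1 q.1 * V p.2 q.2) *
          ((T s).map (algebraMap ℂ A)) =
        ((T s).map (algebraMap ℂ A)) * (W s))
    (hc : ∀ s,
      (Matrix.of fun p q : Fin n × Fin m => V p.1 q.1 * U p.2 q.2) *
          ((Matrix.of fun (p : Fin n × Fin m) (t : Fin (d s)) => T s (p.2, p.1) t).map
            (algebraMap ℂ A)) =
        ((Matrix.of fun (p : Fin n × Fin m) (t : Fin (d s)) => T s (p.2, p.1) t).map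
            (algebraMap ℂ A)) * (W s)) :
    ∀ (i j : Fin m) (k l : Fin n), U i j * V k l = V k l * U i j := by
  have hc' : ∀ s,
      (Matrix.of fun p q : Fin m × Fin n => V p.2 q.2 * U p.1 q.1) *
          ((T s).map (algebraMap ℂ A)) =
        ((T s).map (algebraMap ℂ A)) * (W s) := by
    intro s
    ext p t
    have h := congrFun (congrFun (hc s) (p.2, p.1)) t
    simp only [Matrix.mul_apply, Matrix.of_apply, Matrix.map_apply] at h ⊢
    rw [← h]
    exact Fintype.sum_equiv (Equiv.prodComm _ _) _ _ (fun _ => rfl)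
  have key : (Matrix.of fun p q : Fin m × Fin n => U p.1 q.1 * V p.2 q.2) =
      (Matrix.of fun p q : Fin m × Fin n => V p.2 q.2 * U p.1 q.1) := by
    rw [← mul_one (Matrix.of fun p q : Fin m × Fin n => U p.1 q.1 * V p.2 q.2),
      ← mul_one (Matrix.of fun p q : Fin m × Fin n => V p.2 q.2 * U p.1 q.1), ← ha,
      Finset.mul_sum, Finset.mul_sum]
    refine Finset.sum_congr rfl fun s _ => ?_
    rw [← Matrix.mul_assoc, ← Matrix.mul_assoc, hb, hc']
  intro i j k l
  exact congrFun (congrFun key (i, k)) (j, l)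
end

section
/- Let N and n be positive integers and let {e_{ij}}_{1 ≤ i,j ≤ n} be a system of matrix units in M_N(ℂ), i.e., e_{ij}·e_{kl} = δ_{jk}·e_{il}, (e_{ij})* = e_{ji}, and Σ_{i=1}^n e_{ii} = 1. Let x ∈ M_N(ℂ) and ε > 0 be such that ‖x·e_{ij} − e_{ij}·x‖₂ < ε/n for all i, j. Then ‖(1/n)·Σ_{i,j=1}^n e_{ij}·x·e_{ji} − x‖₂ < ε. -/
open scoped Matrix

/-- The normalized 2-norm `‖a‖₂ = sqrt(τ(a*a))` on `M_N(ℂ)`, where `τ = tr/N`. -/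
noncomputable def l2Norm {N : ℕ} (a : Matrix (Fin N) (Fin N) ℂ) : ℝ :=
  Real.sqrt ((Matrix.trace (aᴴ * a)).re / N)

lemma trace_re_eq_sum {N : ℕ} (a : Matrix (Fin N) (Fin N) ℂ) :
    (Matrix.trace (aᴴ * a)).re = ∑ i, ∑ j, ‖a i j‖ ^ 2 := by
  rw [Finset.sum_comm]
  simp only [Matrix.trace, Matrix.diag, Matrix.mul_apply, Matrix.conjTranspose_apply,
    Complex.re_sum]
  refine Finset.sum_congr rfl fun j _ => Finset.sum_congr rfl fun i _ => ?_
  rw [← Complex.normSq_eq_norm_sq, Complex.normSq_apply]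
  simp

lemma trace_re_nonneg {N : ℕ} (a : Matrix (Fin N) (Fin N) ℂ) :
    0 ≤ (Matrix.trace (aᴴ * a)).re := by
  rw [trace_re_eq_sum]; positivity

attribute [local instance] Matrix.frobeniusNormedAddCommGroup Matrix.frobeniusNormedSpace

lemma l2Norm_eq {N : ℕ} (a : Matrix (Fin N) (Fin N) ℂ) :
    l2Norm a = ‖a‖ / Real.sqrt N := by
  rw [l2Norm, trace_re_eq_sum, Real.sqrt_div (by positivity), Matrix.frobenius_norm_def,
    Real.sqrt_eq_rpow]
  simp

lemma l2Norm_mul_le {N n : ℕ}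
    (e : Fin n → Fin n → Matrix (Fin N) (Fin N) ℂ)
    (hmul : ∀ i j k l, e i j * e k l = if j = k then e i l else 0)
    (hstar : ∀ i j, (e i j)ᴴ = e j i)
    (hsum : ∑ i, e i i = 1) (c : Matrix (Fin N) (Fin N) ℂ) (i j : Fin n) :
    l2Norm (c * e j i) ≤ l2Norm c := by
  have key : ∀ i j, Matrix.trace ((c * e j i)ᴴ * (c * e j i)) = Matrix.trace (cᴴ * c * e j j) := by
    intro i j
    rw [Matrix.conjTranspose_mul, hstar, Matrix.mul_assoc, Matrix.trace_mul_comm,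
      Matrix.mul_assoc, Matrix.mul_assoc, Matrix.mul_assoc, hmul, if_pos rfl]
  have tot : (Matrix.trace (cᴴ * c)).re = ∑ k, (Matrix.trace (cᴴ * c * e k k)).re := by
    rw [← Complex.re_sum, ← Matrix.trace_sum, ← Finset.mul_sum, hsum, mul_one]
  unfold l2Norm
  apply Real.sqrt_le_sqrt
  refine div_le_div_of_nonneg_right ?_ (Nat.cast_nonneg N)
  rw [key, tot]
  refine Finset.single_le_sum (f := fun k => (Matrix.trace (cᴴ * c * e k k)).re)
    (fun k _ => ?_) (Finset.mem_univ j)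
  rw [← key k k]
  exact trace_re_nonneg _

/-- If `x` almost commutes with a system of matrix units, then `x` is close to its
conditional expectation onto the relative commutant of the matrix units. -/
theorem close_to_relative_commutant_expectation
    (N n : ℕ) (hN : 0 < N) (hn : 0 < n)
    (e : Fin n → Fin n → Matrix (Fin N) (Fin N) ℂ)
    (hmul : ∀ i j k l, e i j * e k l = if j = k then e i l else 0)
    (hstar : ∀ i j, (e i j)ᴴ = e j i)
    (hsum : ∑ i, e i i = 1)
    (x : Matrix (Fin N) (Fin N) ℂ) (ε : ℝ)
    (hx : ∀ i j, l2Norm (x * e i j - e i j * x) < ε / n) :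
    l2Norm ((1 / (n : ℂ)) • ∑ i, ∑ j, e i j * x * e j i - x) < ε := by
  have hn' : (n : ℂ) ≠ 0 := by exact_mod_cast hn.ne'
  have hnR : (0 : ℝ) < n := by exact_mod_cast hn
  have hNR : 0 < Real.sqrt N := Real.sqrt_pos.2 (by exact_mod_cast hN)
  have hid : (1 / (n : ℂ)) • ∑ i, ∑ j, e i j * x * e j i - x
      = (1 / (n : ℂ)) • ∑ i, ∑ j, -((x * e i j - e i j * x) * e j i) := by
    have h1 : ∑ i, ∑ j, x * e i j * e j i = (n : ℂ) • x := by
      have : ∀ i j, x * e i j * e j i = x * e i i := by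
        intro i j
        rw [Matrix.mul_assoc, hmul, if_pos rfl]
      simp only [this, Finset.sum_const, Finset.card_univ, Fintype.card_fin]
      rw [← Finset.smul_sum, ← Finset.mul_sum, hsum, mul_one, Nat.cast_smul_eq_nsmul]
    simp only [sub_mul, neg_sub, Finset.sum_sub_distrib, h1, smul_sub, smul_smul]
    rw [one_div_mul_cancel hn', one_smul]
  have hb : ∀ i j, ‖(x * e i j - e i j * x) * e j i‖ < ε / n * Real.sqrt N := by
    intro i j
    rw [← div_lt_iff₀ hNR, ← l2Norm_eq]
    exact (l2Norm_mul_le e hmul hstar hsum _ i j).trans_lt (hx i j)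
  rw [hid, l2Norm_eq, div_lt_iff₀ hNR, norm_smul]
  have hne : (Finset.univ : Finset (Fin n)).Nonempty := ⟨⟨0, hn⟩, Finset.mem_univ _⟩
  have hs : ‖∑ i, ∑ j, -((x * e i j - e i j * x) * e j i)‖ < n * (n * (ε / n * Real.sqrt N)) := by
    calc _ ≤ ∑ i, ∑ j, ‖(x * e i j - e i j * x) * e j i‖ := by
          refine (norm_sum_le _ _).trans (Finset.sum_le_sum fun i _ => ?_)
          refine (norm_sum_le _ _).trans (Finset.sum_le_sum fun j _ => ?_)
          rw [norm_neg]
      _ < ∑ i : Fin n, ∑ j : Fin n, ε / n * Real.sqrt N :=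
          Finset.sum_lt_sum_of_nonempty hne fun i _ =>
            Finset.sum_lt_sum_of_nonempty hne fun j _ => hb i j
      _ = _ := by simp
  have : ‖1 / (n : ℂ)‖ = 1 / n := by simp
  rw [this]
  calc _ < 1 / (n : ℝ) * (n * (n * (ε / n * Real.sqrt N))) := by gcongr
    _ = _ := by field_simp
end

section
/- Let N be a positive integer, u ∈ M_N(ℂ), and δ > 0 such that ‖u*u − 1‖₂ < δ. Then there exists a unitary v ∈ M_N(ℂ) (v*v = 1) such that ‖u − v‖₂ < (3 + ‖u‖)·δ. -/
open scoped Matrix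

/-- The operator norm of a matrix acting on the standard Hermitian space `ℂ^N`. -/
noncomputable def opNorm {N : ℕ} (a : Matrix (Fin N) (Fin N) ℂ) : ℝ :=
  ‖Matrix.toEuclideanCLM (𝕜 := ℂ) a‖

lemma aux_svd {N : ℕ} (X : Matrix (Fin N) (Fin N) ℂ) (s : Fin N → ℝ) (hs : ∀ i, 0 ≤ s i)
    (hX : Xᴴ * X = Matrix.diagonal (fun i => (s i : ℂ))) :
    ∃ W : Matrix (Fin N) (Fin N) ℂ, Wᴴ * W = 1 ∧
      X = W * Matrix.diagonal (fun i => ((Real.sqrt (s i) : ℝ) : ℂ)) := by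
  have key : ∀ i j, ∑ k, star (X k i) * X k j = if i = j then (s i : ℂ) else 0 := by
    intro i j
    have := congrFun (congrFun hX i) j
    rw [Matrix.mul_apply, Matrix.diagonal_apply] at this
    simpa [Matrix.conjTranspose_apply] using this
  let f : Fin N → EuclideanSpace ℂ (Fin N) :=
    fun i => WithLp.toLp 2 (fun k => X k i * (((Real.sqrt (s i))⁻¹ : ℝ) : ℂ))
  let S : Set (Fin N) := {i | s i ≠ 0}
  have horth : Orthonormal ℂ (S.domRestrict f) := by
    rw [orthonormal_iff_ite]
    rintro ⟨i, hi⟩ ⟨j, hj⟩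
    have e1 : inner ℂ (f i) (f j) = (∑ k, star (X k i) * X k j) *
        ((((Real.sqrt (s i))⁻¹ : ℝ) : ℂ) * (((Real.sqrt (s j))⁻¹ : ℝ) : ℂ)) := by
      rw [PiLp.inner_apply, Finset.sum_mul]
      refine Finset.sum_congr rfl fun k _ => ?_
      simp only [f, RCLike.inner_apply, map_mul, Complex.conj_ofReal, starRingEnd_apply]
      simp
      ring
    change inner ℂ (f i) (f j) = _
    rw [e1, key]
    simp only [Subtype.mk.injEq]
    by_cases hij : i = j
    · subst hij
      simp only [if_true]
      have hp : 0 < s i := lt_of_le_of_ne (hs i) (Ne.symm hi)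
      rw [← Complex.ofReal_mul, ← Complex.ofReal_mul, ← mul_inv, Real.mul_self_sqrt (hs i),
        mul_inv_cancel₀ hp.ne', Complex.ofReal_one]
    · simp [hij]
  obtain ⟨b, hb⟩ := horth.exists_orthonormalBasis_extension_of_card_eq (by simp)
  refine ⟨Matrix.of fun k i => b i k, ?_, ?_⟩
  · ext i j
    have := orthonormal_iff_ite.1 b.orthonormal i j
    rw [PiLp.inner_apply] at this
    rw [Matrix.mul_apply, Matrix.one_apply, ← this]
    refine Finset.sum_congr rfl fun k _ => ?_
    simp [Matrix.conjTranspose_apply, RCLike.inner_apply, mul_comm]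
  · ext k i
    rw [Matrix.mul_diagonal, Matrix.of_apply]
    by_cases hi : s i = 0
    · have := key i i
      simp only [if_true, hi] at this
      have h2 : ∑ k, Complex.normSq (X k i) = 0 := by
        have h3 : ((∑ k, Complex.normSq (X k i) : ℝ) : ℂ) = 0 := by
          rw [Complex.ofReal_sum]
          simpa [Complex.normSq_eq_conj_mul_self] using this
        exact_mod_cast h3
      have h4 := (Finset.sum_eq_zero_iff_of_nonneg
        (fun k _ => Complex.normSq_nonneg (X k i))).1 h2 k (Finset.mem_univ _)
      rw [Complex.normSq_eq_zero.1 h4, hi]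
      simp
    · have hp : 0 < s i := lt_of_le_of_ne (hs i) (Ne.symm hi)
      rw [hb i hi]
      simp only [f]
      rw [mul_assoc, ← Complex.ofReal_mul, inv_mul_cancel₀ (Real.sqrt_pos.2 hp).ne']
      simp

lemma aux_trace {N : ℕ} (W U : Matrix (Fin N) (Fin N) ℂ) (d : Fin N → ℝ)
    (hW : Wᴴ * W = 1) (hU : Uᴴ * U = 1) :
    l2Norm (W * Matrix.diagonal (fun i => (d i : ℂ)) * Uᴴ) =
      Real.sqrt ((∑ i, d i ^ 2) / N) := by
  have e : (W * Matrix.diagonal (fun i => (d i : ℂ)) * Uᴴ)ᴴ *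
      (W * Matrix.diagonal (fun i => (d i : ℂ)) * Uᴴ) =
      U * (Matrix.diagonal (fun i => ((d i ^ 2 : ℝ) : ℂ)) * Uᴴ) := by
    have hd : (Matrix.diagonal (fun i => (d i : ℂ)))ᴴ = Matrix.diagonal (fun i => (d i : ℂ)) := by
      rw [Matrix.diagonal_conjTranspose]; congr 1; ext i; simp
    have hdd : Matrix.diagonal (fun i => ((d i ^ 2 : ℝ) : ℂ)) =
        Matrix.diagonal (fun i => (d i : ℂ)) * Matrix.diagonal (fun i => (d i : ℂ)) := by
      rw [Matrix.diagonal_mul_diagonal]; congr 1; ext i; push_cast; ring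
    rw [Matrix.conjTranspose_mul, Matrix.conjTranspose_mul, hd, Matrix.conjTranspose_conjTranspose,
      hdd]
    simp only [Matrix.mul_assoc]
    rw [← Matrix.mul_assoc Wᴴ W, hW, Matrix.one_mul]
  unfold l2Norm
  rw [e, Matrix.trace_mul_comm, Matrix.mul_assoc, hU, Matrix.mul_one, Matrix.trace_diagonal,
    ← Complex.ofReal_sum, Complex.ofReal_re]

open scoped ComplexOrder in
lemma aux_spec {N : ℕ} (u : Matrix (Fin N) (Fin N) ℂ) :
    ∃ (U : Matrix (Fin N) (Fin N) ℂ) (s : Fin N → ℝ),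
      (∀ i, 0 ≤ s i) ∧ Uᴴ * U = 1 ∧ U * Uᴴ = 1 ∧
      uᴴ * u = U * Matrix.diagonal (fun i => (s i : ℂ)) * Uᴴ := by
  have hP : (uᴴ * u).PosSemidef := Matrix.posSemidef_conjTranspose_mul_self u
  have hA : (uᴴ * u).IsHermitian := hP.1
  refine ⟨hA.eigenvectorUnitary, hA.eigenvalues, hP.eigenvalues_nonneg, ?_, ?_, ?_⟩
  · exact Unitary.coe_star_mul_self hA.eigenvectorUnitary
  · exact Unitary.coe_mul_star_self hA.eigenvectorUnitary
  · exact hA.spectral_theorem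

/-- An element which is almost a unitary is 2-norm close to an actual unitary
(Jones, Lemma 3.2.1, in a matrix algebra). -/
theorem near_unitary
    (N : ℕ) (hN : 0 < N) (u : Matrix (Fin N) (Fin N) ℂ) (δ : ℝ)
    (hδ0 : 0 < δ)
    (h : l2Norm (uᴴ * u - 1) < δ) :
    ∃ v : Matrix (Fin N) (Fin N) ℂ,
      vᴴ * v = 1 ∧ l2Norm (u - v) < (3 + opNorm u) * δ := by
  obtain ⟨U, s, hs, hU, hU', hsp⟩ := aux_spec u
  obtain ⟨W, hW, hX⟩ := aux_svd (u * U) s hs (by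
    rw [Matrix.conjTranspose_mul, Matrix.mul_assoc, ← Matrix.mul_assoc uᴴ, hsp]
    simp only [Matrix.mul_assoc]
    rw [hU, Matrix.mul_one, ← Matrix.mul_assoc, hU, Matrix.one_mul])
  have hd : ∀ t : Fin N → ℝ, Matrix.diagonal (fun i => ((t i - 1 : ℝ) : ℂ)) =
      Matrix.diagonal (fun i => (t i : ℂ)) - 1 := by
    intro t
    rw [← Matrix.diagonal_one, Matrix.diagonal_sub]
    congr 1; ext i; simp
  have hu : u = W * Matrix.diagonal (fun i => ((Real.sqrt (s i) : ℝ) : ℂ)) * Uᴴ := by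
    rw [← hX, Matrix.mul_assoc, hU', Matrix.mul_one]
  have h1 : u - W * Uᴴ =
      W * Matrix.diagonal (fun i => ((Real.sqrt (s i) - 1 : ℝ) : ℂ)) * Uᴴ := by
    rw [hd, Matrix.mul_sub, Matrix.sub_mul, ← hu, Matrix.mul_one]
  have h2 : uᴴ * u - 1 =
      U * Matrix.diagonal (fun i => ((s i - 1 : ℝ) : ℂ)) * Uᴴ := by
    rw [hd, Matrix.mul_sub, Matrix.sub_mul, ← hsp, Matrix.mul_one, hU']
  refine ⟨W * Uᴴ, ?_, ?_⟩
  · rw [Matrix.conjTranspose_mul, Matrix.conjTranspose_conjTranspose, Matrix.mul_assoc,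
      ← Matrix.mul_assoc Wᴴ, hW, Matrix.one_mul, hU']
  · have hle : l2Norm (u - W * Uᴴ) ≤ l2Norm (uᴴ * u - 1) := by
      rw [h1, h2, aux_trace W U _ hW hU, aux_trace U U _ hU hU]
      apply Real.sqrt_le_sqrt
      gcongr ?_ / _
      refine Finset.sum_le_sum fun i _ => ?_
      have hr := Real.sqrt_nonneg (s i)
      have hq := Real.sq_sqrt (hs i)
      set r := Real.sqrt (s i)
      rw [← hq]
      have : (r ^ 2 - 1) ^ 2 - (r - 1) ^ 2 = (r - 1) ^ 2 * (r * (r + 2)) := by ring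
      have : 0 ≤ (r - 1) ^ 2 * (r * (r + 2)) := by positivity
      linarith
    have hop : 0 ≤ opNorm u := norm_nonneg _
    nlinarith [mul_nonneg hop hδ0.le]
end

section
/- Let π, ρ, σ be unitary matrix representations of a finite group G, of dimensions dπ, dρ, dσ. For every intertwiner T from σ to π⊗ρ, the matrix T̃ with entries T̃_{(i,m),k} = sqrt(dρ/dσ)·conj(T_{(i,k),m}) is an intertwiner from ρ to π̄⊗σ. Moreover, the map T ↦ T̃ is a bijection from the set of intertwiners from σ to π⊗ρ onto the set of intertwiners from ρ to π̄⊗σ. -/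
open scoped Matrix Kronecker

/-- The Frobenius reciprocity map `(σ, π⊗ρ) → (ρ, π̄⊗σ)`,
`T̃_{(i,m),k} = sqrt(dρ/dσ) · conj(T_{(i,k),m})`. -/
noncomputable def frobMap (dπ dρ dσ : ℕ) (T : Matrix (Fin dπ × Fin dρ) (Fin dσ) ℂ) :
    Matrix (Fin dπ × Fin dσ) (Fin dρ) ℂ :=
  Matrix.of fun (p : Fin dπ × Fin dσ) (k : Fin dρ) =>
    (Real.sqrt ((dρ : ℝ) / (dσ : ℝ)) : ℂ) * star (T (p.1, k) p.2)

theorem kron_iff {a b d : ℕ} (P : Matrix (Fin a) (Fin a) ℂ) (R : Matrix (Fin b) (Fin b) ℂ)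
    (S : Matrix (Fin d) (Fin d) ℂ) (T : Matrix (Fin a × Fin b) (Fin d) ℂ) :
    (P ⊗ₖ R) * T = T * S ↔
      ∀ i, R * (∑ j, P i j • (Matrix.of fun k m => T (j, k) m)) =
        (Matrix.of fun k m => T (i, k) m) * S := by
  have e : ∀ i k m, ((P ⊗ₖ R) * T) (i, k) m =
      (R * (∑ j, P i j • (Matrix.of fun k m => T (j, k) m))) k m := by
    intro i k m
    simp only [Matrix.mul_apply, Fintype.sum_prod_type, Matrix.kroneckerMap_apply,
      Matrix.sum_apply, Matrix.smul_apply, Matrix.of_apply, smul_eq_mul, Finset.mul_sum]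
    rw [Finset.sum_comm]
    refine Finset.sum_congr rfl fun l _ => Finset.sum_congr rfl fun j _ => by ring
  constructor
  · intro h i
    ext k m
    rw [← e, h]
    simp [Matrix.mul_apply]
  · intro h
    ext ⟨i, k⟩ m
    rw [e, h]
    simp [Matrix.mul_apply]

theorem key {a b d : ℕ} (P : Matrix (Fin a) (Fin a) ℂ) (R : Matrix (Fin b) (Fin b) ℂ)
    (S : Matrix (Fin d) (Fin d) ℂ) (T : Matrix (Fin a × Fin b) (Fin d) ℂ) (c : ℂ)
    (hR : Rᴴ * R = 1) (hS : Sᴴ * S = 1) (h : (P ⊗ₖ R) * T = T * S) :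
    (P.map star ⊗ₖ S) * (Matrix.of fun (p : Fin a × Fin d) (k : Fin b) =>
        c * star (T (p.1, k) p.2)) =
      (Matrix.of fun (p : Fin a × Fin d) (k : Fin b) => c * star (T (p.1, k) p.2)) * R := by
  have hS' : S * Sᴴ = 1 := mul_eq_one_comm.mp hS
  rw [kron_iff] at h ⊢
  intro i
  have e : ∀ j, (Matrix.of fun (m : Fin d) (k : Fin b) => c * star (T (j, k) m)) =
      c • (Matrix.of fun k m => T (j, k) m)ᴴ := by
    intro j
    ext m k
    simp
  have h2 := congrArg Matrix.conjTranspose (h i)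
  rw [Matrix.conjTranspose_mul, Matrix.conjTranspose_mul] at h2
  have h3 : (∑ j, P i j • (Matrix.of fun k m => T (j, k) m))ᴴ =
      Sᴴ * (Matrix.of fun k m => T (i, k) m)ᴴ * R := by
    rw [← h2, Matrix.mul_assoc, hR, Matrix.mul_one]
  have h4 : (∑ j, (P.map star) i j • (Matrix.of fun (m : Fin d) (k : Fin b) =>
      c * star (T (j, k) m))) = c • (∑ j, P i j • (Matrix.of fun k m => T (j, k) m))ᴴ := by
    simp only [e, Matrix.conjTranspose_sum, Matrix.conjTranspose_smul, Finset.smul_sum,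
      Matrix.map_apply]
    refine Finset.sum_congr rfl fun j _ => smul_comm _ _ _
  change S * (∑ j, (P.map star) i j • (Matrix.of fun (m : Fin d) (k : Fin b) =>
      c * star (T (j, k) m))) = (Matrix.of fun (m : Fin d) (k : Fin b) =>
      c * star (T (i, k) m)) * R
  rw [h4, h3, e, Matrix.mul_smul, Matrix.smul_mul, ← Matrix.mul_assoc, ← Matrix.mul_assoc, hS',
    Matrix.one_mul]

/-- Frobenius reciprocity: `T ↦ T̃` is a bijection from the intertwiners `(σ, π⊗ρ)`
onto the intertwiners `(ρ, π̄⊗σ)`. -/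
theorem frobenius_reciprocity_bijOn
    {G : Type*} [Group G] [Fintype G]
    (dπ dρ dσ : ℕ)
    (π : G → Matrix (Fin dπ) (Fin dπ) ℂ)
    (ρ : G → Matrix (Fin dρ) (Fin dρ) ℂ)
    (σ : G → Matrix (Fin dσ) (Fin dσ) ℂ)
    (hπmul : ∀ g h, π (g * h) = π g * π h) (hπone : π 1 = 1)
    (hπu : ∀ g, (π g)ᴴ * π g = 1)
    (hρmul : ∀ g h, ρ (g * h) = ρ g * ρ h) (hρone : ρ 1 = 1)
    (hρu : ∀ g, (ρ g)ᴴ * ρ g = 1)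
    (hσmul : ∀ g h, σ (g * h) = σ g * σ h) (hσone : σ 1 = 1)
    (hσu : ∀ g, (σ g)ᴴ * σ g = 1) :
    Set.BijOn (frobMap dπ dρ dσ)
      {T : Matrix (Fin dπ × Fin dρ) (Fin dσ) ℂ | ∀ g, (π g ⊗ₖ ρ g) * T = T * σ g}
      {S : Matrix (Fin dπ × Fin dσ) (Fin dρ) ℂ |
        ∀ g, ((π g).map star ⊗ₖ σ g) * S = S * ρ g} := by
  have hc : ∀ (_ : Fin dρ) (_ : Fin dσ), (Real.sqrt ((dρ : ℝ) / (dσ : ℝ)) : ℂ) ≠ 0 := by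
    intro k m
    have h1 : (0 : ℝ) < dρ := by exact_mod_cast k.pos
    have h2 : (0 : ℝ) < dσ := by exact_mod_cast m.pos
    exact_mod_cast (Real.sqrt_pos.mpr (div_pos h1 h2)).ne'
  refine ⟨fun T hT g => key _ _ _ T _ (hρu g) (hσu g) (hT g), ?_, ?_⟩
  · intro T _ T' _ h
    ext ⟨i, k⟩ m
    have := congrFun (congrFun h (i, m)) k
    simp only [frobMap, Matrix.of_apply] at this
    exact star_injective (mul_left_cancel₀ (hc k m) this)
  · intro S hS
    refine ⟨Matrix.of fun (p : Fin dπ × Fin dρ) (m : Fin dσ) =>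
        (Real.sqrt ((dρ : ℝ) / (dσ : ℝ)) : ℂ)⁻¹ * star (S (p.1, m) p.2), fun g => ?_, ?_⟩
    · have := key _ _ _ S (Real.sqrt ((dρ : ℝ) / (dσ : ℝ)) : ℂ)⁻¹ (hσu g) (hρu g) (hS g)
      have e : ((π g).map star).map star = π g := by ext; simp
      rwa [e] at this
    · ext ⟨i, m⟩ k
      have := hc k m
      simp only [frobMap, Matrix.of_apply, star_mul', star_star, star_inv₀]
      rw [show star (Real.sqrt ((dρ : ℝ) / (dσ : ℝ)) : ℂ) =
        (Real.sqrt ((dρ : ℝ) / (dσ : ℝ)) : ℂ) from Complex.conj_ofReal _]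
      rw [mul_inv_cancel_left₀ this]
end
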